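/- Every cutting blocking set S of PG(N,q) has at least N(q+1) points. Equivalently, every minimal [n,k]_q linear code satisfies n ≥ (q+1)(k-1). -/

import Mathlib

open Module

lemma core_bound (K : Type) [Field K] [Fintype K] {W : Type} [AddCommGroup W] [Module K W]
    {ι : Type} [Fintype ι] (φ : W →ₗ[K] (ι → K)) (N : ℕ) (hW : finrank K W = N + 1)
    (hmin : ∀ c : W, c ≠ 0 → ∀ g : W, (∀ i, φ c i = 0 → φ g i = 0) → ∃ l : K, g = l • c) :
    N * (Fintype.card K + 1) ≤ Fintype.card ι := by
  classical
  have hfd : FiniteDimensional K W := FiniteDimensional.of_finrank_pos (by omega)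
  have hfin : Finite W := Module.finite_of_finite K
  have hnt : Nontrivial W := Module.nontrivial_of_finrank_pos (R := K) (by omega)
  obtain ⟨c1, hc1⟩ := exists_ne (0 : W)
  have : Nonempty {c : W // c ≠ 0} := ⟨⟨c1, hc1⟩⟩
  let wt : W → ℕ := fun c => (Finset.univ.filter (fun i => φ c i ≠ 0)).card
  obtain ⟨⟨c, hc⟩, hcmax⟩ := Finite.exists_max (fun c : {c : W // c ≠ 0} => wt c.1)
  have hmax : ∀ g : W, wt g ≤ wt c := by
    intro g
    by_cases hg : g = 0
    · subst hg; simp [wt]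
    · exact hcmax ⟨g, hg⟩
  let T : W → Finset ι := fun g => Finset.univ.filter (fun i => φ c i = 0 ∧ φ g i ≠ 0)
  obtain ⟨g, hg⟩ := Finite.exists_max (fun g : W => (T g).card)
  -- the rank bound
  have h1 : N ≤ (T g).card := by
    let ψ : W →ₗ[K] (T g → K) := LinearMap.pi (fun i => (LinearMap.proj i.1).comp φ)
    have hker : LinearMap.ker ψ ≤ Submodule.span K {c} := by
      intro h hh
      have hh' : ∀ i ∈ T g, φ h i = 0 := fun i hi => congrFun (LinearMap.mem_ker.1 hh) ⟨i, hi⟩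
      obtain ⟨l, hl⟩ := hmin c hc h (by
        intro i hi
        by_contra hne
        have hlt : T g ⊂ T (g + h) := by
          rw [Finset.ssubset_iff_of_subset]
          · refine ⟨i, ?_, fun hi' => hne (hh' i hi')⟩
            have : φ g i = 0 := by
              by_contra h0
              exact hne (hh' i (by simp [T, hi, h0]))
            simp [T, hi, this, hne]
          · intro j hj
            have := hh' j hj
            simp only [T, Finset.mem_filter, Finset.mem_univ, true_and] at hj ⊢
            simpa [this] using hj
        have := Finset.card_lt_card hlt
        have := hg (g + h)
        omega)
      rw [hl]
      exact Submodule.smul_mem _ _ (Submodule.mem_span_singleton_self c)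
    have e1 := ψ.finrank_range_add_finrank_ker
    have e2 : finrank K (LinearMap.range ψ) ≤ (T g).card := by
      simpa using Submodule.finrank_le (LinearMap.range ψ)
    have e3 := Submodule.finrank_mono hker
    rw [finrank_span_singleton hc] at e3
    omega
  -- disjointness
  have h2 : (T g).card + wt c ≤ Fintype.card ι := by
    rw [← Finset.card_union_of_disjoint]
    · exact Finset.card_le_univ _
    · rw [Finset.disjoint_left]
      intro i hi
      simp only [T, Finset.mem_filter, Finset.mem_univ, true_and] at hi ⊢
      exact fun h => h hi.1
  -- double counting
  have h3 : Fintype.card K * (T g).card + (Fintype.card K - 1) * wt c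
      ≤ Fintype.card K * wt c := by
    calc Fintype.card K * (T g).card + (Fintype.card K - 1) * wt c
        = ∑ i : ι, ((if φ c i = 0 ∧ φ g i ≠ 0 then Fintype.card K else 0)
            + (if φ c i ≠ 0 then (Fintype.card K - 1) else 0)) := by
          rw [Finset.sum_add_distrib, ← Finset.sum_filter, ← Finset.sum_filter,
            Finset.sum_const, Finset.sum_const, smul_eq_mul, smul_eq_mul,
            mul_comm, mul_comm (wt c)]
      _ ≤ ∑ i : ι, ∑ l : K, (if φ (g + l • c) i ≠ 0 then 1 else 0) := by
          apply Finset.sum_le_sum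
          intro i _
          by_cases hci : φ c i = 0
          · by_cases hgi : φ g i = 0 <;> simp [hci, hgi]
          · rw [← Finset.card_filter]
            have : Finset.univ.filter (fun l : K => φ (g + l • c) i ≠ 0)
                = Finset.univ.erase (-(φ g i) / φ c i) := by
              ext l
              simp only [Finset.mem_filter, Finset.mem_univ, true_and, Finset.mem_erase, and_true,
                map_add, map_smul, Pi.add_apply, Pi.smul_apply, smul_eq_mul]
              rw [not_iff_not, eq_div_iff hci, eq_neg_iff_add_eq_zero, add_comm]
            rw [this]
            simp [hci, Finset.card_erase_of_mem]
      _ = ∑ l : K, wt (g + l • c) := by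
          rw [Finset.sum_comm]
          simp only [wt, Finset.card_filter]
      _ ≤ ∑ l : K, wt c := Finset.sum_le_sum (fun l _ => hmax _)
      _ = Fintype.card K * wt c := by simp
  have hq : 0 < Fintype.card K := Fintype.card_pos
  obtain ⟨r, hr⟩ : ∃ r, Fintype.card K = r + 1 := ⟨_, (Nat.succ_pred_eq_of_pos hq).symm⟩
  rw [hr] at h3 ⊢
  simp only [Nat.add_sub_cancel] at h3
  have h4 : (r + 1) * N ≤ (r + 1) * (T g).card := Nat.mul_le_mul_left _ h1
  nlinarith

theorem stmt_16 (q : ℕ) (K : Type) [Field K] [Fintype K] (hK : Fintype.card K = q) :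
    -- every cutting blocking set of PG(N,q) has at least N(q+1) points
    (∀ (N : ℕ) (S : Set (Projectivization K (Fin (N + 1) → K))),
      (∀ H : Submodule K (Fin (N + 1) → K), finrank K H = N →
        Submodule.span K
            {v : Fin (N + 1) → K |
              (∃ hv : v ≠ 0, Projectivization.mk K v hv ∈ S) ∧ v ∈ H} = H) →
      N * (q + 1) ≤ S.ncard) ∧
    -- equivalently, every minimal [n,k]_q code satisfies n ≥ (q+1)(k-1)
    (∀ (n k : ℕ) (C : Submodule K (Fin n → K)), finrank K C = k →
      (∀ c ∈ C, c ≠ 0 →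
        ∀ c' ∈ C, {i | c' i ≠ 0} ⊆ {i | c i ≠ 0} → ∃ lam : K, c' = lam • c) →
      (q + 1) * (k - 1) ≤ n) := by
  classical
  subst hK
  constructor
  · intro N S hS
    have : Finite (Projectivization K (Fin (N + 1) → K)) :=
      Finite.of_surjective
        (fun v : {v : Fin (N + 1) → K // v ≠ 0} => Projectivization.mk K v.1 v.2)
        (fun p => ⟨⟨p.rep, p.rep_nonzero⟩, p.mk_rep⟩)
    have : Fintype S := Fintype.ofFinite S
    rw [← Nat.card_coe_set_eq, Nat.card_eq_fintype_card]
    let φ : Dual K (Fin (N + 1) → K) →ₗ[K] (S → K) :=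
      LinearMap.pi (fun s => Dual.eval K (Fin (N + 1) → K) s.1.rep)
    refine core_bound K φ N (by rw [Subspace.dual_finrank_eq]; simp) ?_
    intro f hf g hfg
    have hH : finrank K (LinearMap.ker f) = N := by
      have := Module.Dual.finrank_ker_add_one_of_ne_zero hf
      simp at this
      exact this
    have hle : LinearMap.ker f ≤ LinearMap.ker g := by
      rw [← hS _ hH, Submodule.span_le]
      rintro v ⟨⟨hv, hvS⟩, hvf⟩
      obtain ⟨a, ha⟩ := Projectivization.exists_smul_eq_mk_rep K v hv
      have hvf' : f v = 0 := hvf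
      have := hfg ⟨_, hvS⟩ (by
        change f (Projectivization.mk K v hv).rep = 0
        rw [← ha, Units.smul_def, map_smul, hvf', smul_zero])
      change g (Projectivization.mk K v hv).rep = 0 at this
      rw [← ha, Units.smul_def, map_smul, smul_eq_mul] at this
      exact (mul_eq_zero.1 this).resolve_left a.ne_zero
    obtain ⟨x, hx⟩ : ∃ x, f x ≠ 0 := by
      by_contra! h
      exact hf (LinearMap.ext h)
    refine ⟨g x / f x, LinearMap.ext fun y => ?_⟩
    have hy : y - (f y / f x) • x ∈ LinearMap.ker f := by
      simp [hx]
    have := hle hy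
    rw [LinearMap.mem_ker, map_sub, map_smul, sub_eq_zero] at this
    rw [this]
    simp only [LinearMap.smul_apply, smul_eq_mul]
    ring
  · intro n k C hk hC
    obtain _ | N := k
    · simp
    have := core_bound K C.subtype N hk (by
      intro c hc g hcg
      obtain ⟨l, hl⟩ := hC c c.2 (by simpa using hc) g g.2 (by
        intro i hi h0
        exact hi (hcg i h0))
      exact ⟨l, Subtype.ext hl⟩)
    simpa [mul_comm] using this
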